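/- arXiv:2304.14990 — 10 statements merged into one kernel-verified Lean document; each statement's English description precedes it below -/
import Mathlib

section
/- For every finite Stackelberg game (u_l, u_f) with m ≥ 1 leader actions and n ≥ 1 follower actions, utilities valued in [0,1], and every δ > 0, the supremum sup_{x ∈ Δ^m} min_{j ∈ BR_δ(x)} u_l(x, j) is attained: there exists a leader mixed strategy x* ∈ Δ^m such that min_{j ∈ BR_δ(x*)} u_l(x*, j) = sup_{x ∈ Δ^m} min_{j ∈ BR_δ(x)} u_l(x, j). In particular, a δ-robust Stackelberg equilibrium (a pair (x*, j*) with j* ∈ argmin_{j ∈ BR_δ(x*)} u_l(x*, j)) exists in every game for any δ > 0. -/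
open Finset Set

noncomputable section

/-- The simplex of mixed strategies over `m` actions. -/
def simplex (m : ℕ) : Set (Fin m → ℝ) := stdSimplex ℝ (Fin m)

/-- Mixed-strategy extension of a utility matrix: `u(x, j) = ∑ i, x i * u i j`. -/
def mixU {m n : ℕ} (u : Fin m → Fin n → ℝ) (x : Fin m → ℝ) (j : Fin n) : ℝ :=
  ∑ i, x i * u i j

/-- The follower's δ-optimal response set (strict inequality):
`BR_δ(x) = {j : u_f(x,j) > max_{j'} u_f(x,j') - δ}`. -/
def BRd {m n : ℕ} (uf : Fin m → Fin n → ℝ) (δ : ℝ) (x : Fin m → ℝ) : Set (Fin n) :=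
  {j | mixU uf x j > (⨆ j', mixU uf x j') - δ}

/-- The follower's exact best-response set. -/
def BR0 {m n : ℕ} (uf : Fin m → Fin n → ℝ) (x : Fin m → ℝ) : Set (Fin n) :=
  {j | mixU uf x j = ⨆ j', mixU uf x j'}

/-- Worst-case leader utility over the follower's δ-optimal response set:
`min_{j ∈ BR_δ(x)} u_l(x, j)`. -/
def valBR {m n : ℕ} (ul uf : Fin m → Fin n → ℝ) (δ : ℝ) (x : Fin m → ℝ) : ℝ :=
  sInf (mixU ul x '' BRd uf δ x)

/-- The δ-RSE leader utility `u_RSE(δ) = sup_{x ∈ Δ^m} min_{j ∈ BR_δ(x)} u_l(x, j)`. -/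
def uRSE {m n : ℕ} (ul uf : Fin m → Fin n → ℝ) (δ : ℝ) : ℝ :=
  sSup (valBR ul uf δ '' simplex m)

/-- The SSE leader utility `u_SSE = sup_{x ∈ Δ^m} max_{j ∈ BR_0(x)} u_l(x, j)`. -/
def uSSE {m n : ℕ} (ul uf : Fin m → Fin n → ℝ) : ℝ :=
  sSup ((fun x => sSup (mixU ul x '' BR0 uf x)) '' simplex m)

/-- The maximin leader utility `u_MM = sup_{x ∈ Δ^m} min_{j ∈ [n]} u_l(x, j)`. -/
def uMM {m n : ℕ} (ul : Fin m → Fin n → ℝ) : ℝ :=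
  sSup ((fun x => ⨅ j, mixU ul x j) '' simplex m)

/-- The inducibility gap
`Δ = min_{j} sup_{x ∈ Δ^m} min_{j' ≠ j} (u_f(x, j) - u_f(x, j'))`. -/
def indGap {m n : ℕ} (uf : Fin m → Fin n → ℝ) : ℝ :=
  ⨅ j, sSup ((fun x => ⨅ j' : {k : Fin n // k ≠ j}, (mixU uf x j - mixU uf x j'.1)) '' simplex m)

theorem mem_BRd_iff {m n : ℕ} (hn : 1 ≤ n) (uf : Fin m → Fin n → ℝ) (δ : ℝ) (x : Fin m → ℝ)
    (j : Fin n) : j ∈ BRd uf δ x ↔ ∀ j', mixU uf x j' - δ < mixU uf x j := by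
  haveI : Nonempty (Fin n) := ⟨⟨0, hn⟩⟩
  constructor
  · intro h j'
    have h1 : mixU uf x j > (⨆ j', mixU uf x j') - δ := h
    have h2 : mixU uf x j' ≤ ⨆ j', mixU uf x j' :=
      le_ciSup (Set.finite_range (mixU uf x)).bddAbove j'
    linarith
  · intro h
    obtain ⟨k, hk⟩ := exists_eq_ciSup_of_finite (f := mixU uf x)
    change mixU uf x j > (⨆ j', mixU uf x j') - δ
    rw [← hk]
    exact h k

theorem exists_valBR {m n : ℕ} (hn : 1 ≤ n) (ul uf : Fin m → Fin n → ℝ) (δ : ℝ) (hδ : 0 < δ)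
    (x : Fin m → ℝ) : ∃ j ∈ BRd uf δ x, mixU ul x j = valBR ul uf δ x := by
  haveI : Nonempty (Fin n) := ⟨⟨0, hn⟩⟩
  have hne : (BRd uf δ x).Nonempty := by
    obtain ⟨k, hk⟩ := exists_eq_ciSup_of_finite (f := mixU uf x)
    refine ⟨k, ?_⟩
    change mixU uf x k > (⨆ j', mixU uf x j') - δ
    rw [← hk]
    linarith
  have h := (hne.image (mixU ul x)).csInf_mem ((Set.toFinite (BRd uf δ x)).image _)
  exact h

theorem continuous_mixU {m n : ℕ} (u : Fin m → Fin n → ℝ) (j : Fin n) :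
    Continuous (fun x => mixU u x j) := by
  unfold mixU
  fun_prop

theorem usc_valBR {m n : ℕ} (hn : 1 ≤ n) (ul uf : Fin m → Fin n → ℝ) (δ : ℝ) (hδ : 0 < δ) :
    UpperSemicontinuous (valBR ul uf δ) := by
  intro x y hy
  obtain ⟨j, hj, hjv⟩ := exists_valBR hn ul uf δ hδ x
  rw [mem_BRd_iff hn] at hj
  have h1 : ∀ᶠ z in nhds x, mixU ul z j < y :=
    (continuous_mixU ul j).continuousAt.eventually_lt continuousAt_const (by rw [hjv]; exact hy)
  have h2 : ∀ᶠ z in nhds x, ∀ j', mixU uf z j' - δ < mixU uf z j := by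
    rw [Filter.eventually_all]
    intro j'
    exact ((continuous_mixU uf j').sub continuous_const).continuousAt.eventually_lt
      (continuous_mixU uf j).continuousAt (hj j')
  filter_upwards [h1, h2] with z hz1 hz2
  refine lt_of_le_of_lt ?_ hz1
  exact csInf_le ((Set.toFinite (BRd uf δ z)).image _).bddBelow
    ⟨j, (mem_BRd_iff hn uf δ z j).2 hz2, rfl⟩

/-- existence of a δ-RSE. -/
theorem rse_exists (m n : ℕ) (hm : 1 ≤ m) (hn : 1 ≤ n)
    (ul uf : Fin m → Fin n → ℝ)
    (hul : ∀ i j, ul i j ∈ Set.Icc (0:ℝ) 1) (huf : ∀ i j, uf i j ∈ Set.Icc (0:ℝ) 1)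
    (δ : ℝ) (hδ : 0 < δ) :
    ∃ x ∈ simplex m,
      valBR ul uf δ x = sSup (valBR ul uf δ '' simplex m) ∧
      ∃ j ∈ BRd uf δ x, mixU ul x j = valBR ul uf δ x := by
  have hne : (simplex m).Nonempty := by
    classical
    exact ⟨Pi.single ⟨0, hm⟩ 1, single_mem_stdSimplex ℝ _⟩
  have hc : IsCompact (simplex m) := isCompact_stdSimplex ℝ (Fin m)
  obtain ⟨x, hx, hmax⟩ :=
    ((usc_valBR hn ul uf δ hδ).upperSemicontinuousOn (simplex m)).exists_isMaxOn hne hc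
  refine ⟨x, hx, ?_, exists_valBR hn ul uf δ hδ x⟩
  have hg : IsGreatest (valBR ul uf δ '' simplex m) (valBR ul uf δ x) := by
    refine ⟨⟨x, hx, rfl⟩, ?_⟩
    rintro _ ⟨z, hz, rfl⟩
    exact hmax hz
  exact hg.csSup_eq.symm
end
end

section
/- Let (u_l, u_f) be a finite Stackelberg game with utilities in [0,1], n ≥ 2 follower actions, and inducibility gap Δ > 0. Then for every δ with 0 < δ < Δ, the δ-RSE leader utility satisfies u_RSE(δ) ≥ u_SSE − δ/Δ. -/
open Finset Set

noncomputable section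

lemma mixU_mem {m n : ℕ} (u : Fin m → Fin n → ℝ) (hu : ∀ i j, u i j ∈ Set.Icc (0:ℝ) 1)
    {x : Fin m → ℝ} (hx : x ∈ simplex m) (j : Fin n) : mixU u x j ∈ Set.Icc (0:ℝ) 1 := by
  obtain ⟨h0, h1⟩ := hx
  constructor
  · exact Finset.sum_nonneg fun i _ => mul_nonneg (h0 i) (hu i j).1
  · rw [← h1]
    exact Finset.sum_le_sum fun i _ => mul_le_of_le_one_right (h0 i) (hu i j).2

lemma mixU_comb {m n : ℕ} (u : Fin m → Fin n → ℝ) (x y : Fin m → ℝ) (s t : ℝ) (j : Fin n) :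
    mixU u (s • x + t • y) j = s * mixU u x j + t * mixU u y j := by
  simp only [mixU, Finset.mul_sum, ← Finset.sum_add_distrib]
  refine Finset.sum_congr rfl fun i _ => ?_
  simp only [Pi.add_apply, Pi.smul_apply, smul_eq_mul]
  ring

lemma exists_induce {m n : ℕ} (uf : Fin m → Fin n → ℝ) (D : ℝ) (hD : 0 < D)
    (hDΔ : D < indGap uf) (j : Fin n) :
    ∃ x ∈ simplex m, ∀ k, k ≠ j → D ≤ mixU uf x j - mixU uf x k := by
  have h1 := lt_of_lt_of_le hDΔ (ciInf_le (Set.finite_range _).bddBelow j)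
  rcases (simplex m).eq_empty_or_nonempty with he | hne
  · rw [he, Set.image_empty, Real.sSup_empty] at h1
    linarith
  · obtain ⟨_, ⟨x, hx, rfl⟩, h⟩ := exists_lt_of_lt_csSup (hne.image _) h1
    refine ⟨x, hx, fun k hk => ?_⟩
    exact h.le.trans (ciInf_le (f := fun j' : {k : Fin n // k ≠ j} =>
      mixU uf x j - mixU uf x j'.1) (Set.finite_range _).bddBelow ⟨k, hk⟩)

lemma BRd_nonempty {m n : ℕ} (hn : 2 ≤ n) (uf : Fin m → Fin n → ℝ) (x : Fin m → ℝ) :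
    (BR0 uf x).Nonempty := by
  haveI : Nonempty (Fin n) := ⟨⟨0, by omega⟩⟩
  exact exists_eq_ciSup_of_finite (f := fun j => mixU uf x j)

lemma key {m n : ℕ} (hn : 2 ≤ n) (ul uf : Fin m → Fin n → ℝ)
    (hul : ∀ i j, ul i j ∈ Set.Icc (0:ℝ) 1) (δ : ℝ) (hδ : 0 < δ) (D : ℝ) (hδD : δ < D)
    (hDΔ : D < indGap uf) (x : Fin m → ℝ) (hx : x ∈ simplex m) (j : Fin n)
    (hj : j ∈ BR0 uf x) : mixU ul x j - δ / D ≤ uRSE ul uf δ := by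
  have hD : 0 < D := hδ.trans hδD
  haveI : Nonempty (Fin n) := ⟨j⟩
  obtain ⟨z, hz, hzj⟩ := exists_induce uf D hD hDΔ j
  set t := δ / D with ht
  have ht0 : 0 < t := div_pos hδ hD
  have ht1 : t < 1 := (div_lt_one hD).2 hδD
  have htD : t * D = δ := div_mul_cancel₀ _ hD.ne'
  set y := (1 - t) • x + t • z with hy
  have hys : y ∈ simplex m :=
    convex_stdSimplex ℝ (Fin m) hx hz (by linarith) ht0.le (by ring)
  have hgap : ∀ k, k ≠ j → mixU uf y k + δ ≤ mixU uf y j := by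
    intro k hk
    rw [hy, mixU_comb, mixU_comb]
    have h1 : mixU uf x k ≤ mixU uf x j := by
      rw [show mixU uf x j = _ from hj]
      exact le_ciSup (f := fun j => mixU uf x j) (Set.finite_range _).bddAbove k
    have h2 := mul_le_mul_of_nonneg_left (hzj k hk) ht0.le
    have h3 := mul_le_mul_of_nonneg_left h1 (by linarith : 0 ≤ 1 - t)
    linarith
  have hsup : (⨆ k, mixU uf y k) = mixU uf y j := by
    apply le_antisymm
    · refine ciSup_le fun k => ?_
      by_cases hk : k = j
      · rw [hk]
      · linarith [hgap k hk]
    · exact le_ciSup (f := fun j => mixU uf y j) (Set.finite_range _).bddAbove j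
  have hBR : BRd uf δ y = {j} := by
    ext k
    simp only [BRd, hsup, Set.mem_setOf_eq, Set.mem_singleton_iff]
    constructor
    · intro h
      by_contra hk
      linarith [hgap k hk]
    · rintro rfl
      linarith
  have hval : valBR ul uf δ y = mixU ul y j := by
    rw [valBR, hBR, Set.image_singleton, csInf_singleton]
  have hb : BddAbove (valBR ul uf δ '' simplex m) := by
    refine ⟨1, ?_⟩
    rintro _ ⟨w, hw, rfl⟩
    obtain ⟨k, hk⟩ := BRd_nonempty hn uf w
    have hk' : k ∈ BRd uf δ w := by
      have : mixU uf w k = _ := hk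
      simp only [BRd, Set.mem_setOf_eq]
      linarith
    exact (csInf_le ((Set.toFinite (BRd uf δ w)).image _).bddBelow ⟨k, hk', rfl⟩).trans
      (mixU_mem ul hul hw k).2
  have hle : valBR ul uf δ y ≤ uRSE ul uf δ := le_csSup hb ⟨y, hys, rfl⟩
  rw [hval, hy, mixU_comb] at hle
  have h4 := mixU_mem ul hul hx j
  have h5 := mixU_mem ul hul hz j
  nlinarith [mul_nonneg ht0.le h5.1, mul_nonneg ht0.le (sub_nonneg.2 h4.2)]

/-- `u_RSE(δ) ≥ u_SSE − δ/Δ` for `0 < δ < Δ`. -/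
theorem uRSE_ge_uSSE_sub (m n : ℕ) (hn : 2 ≤ n) (ul uf : Fin m → Fin n → ℝ)
    (hul : ∀ i j, ul i j ∈ Set.Icc (0:ℝ) 1) (huf : ∀ i j, uf i j ∈ Set.Icc (0:ℝ) 1)
    (hΔ : 0 < indGap uf) (δ : ℝ) (hδ : 0 < δ) (hδΔ : δ < indGap uf) :
    uSSE ul uf - δ / indGap uf ≤ uRSE ul uf δ := by
  have hne : (simplex m).Nonempty := by
    obtain ⟨x, hx, -⟩ := exists_induce uf δ hδ hδΔ ⟨0, by omega⟩
    exact ⟨x, hx⟩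
  rw [sub_le_iff_le_add]
  refine csSup_le (hne.image _) ?_
  rintro _ ⟨x, hx, rfl⟩
  refine csSup_le ((BRd_nonempty hn uf x).image _) ?_
  rintro _ ⟨j, hj, rfl⟩
  by_contra! hcon
  set c := mixU ul x j - uRSE ul uf δ with hc
  have hc1 : δ / indGap uf < c := by linarith
  have hc0 : 0 < c := (div_pos hδ hΔ).trans hc1
  have hc2 : δ / c < indGap uf := by
    rw [div_lt_iff₀ hΔ] at hc1
    rw [div_lt_iff₀ hc0]
    linarith
  obtain ⟨D, hD1, hD2⟩ := exists_between (max_lt hδΔ hc2)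
  have hk := key hn ul uf hul δ hδ D ((le_max_left _ _).trans_lt hD1) hD2 x hx j hj
  have hD3 : δ / c < D := (le_max_right _ _).trans_lt hD1
  have hD0 : 0 < D := (div_pos hδ hc0).trans hD3
  have h6 : δ / D < c := by
    rw [div_lt_iff₀ hc0] at hD3
    rw [div_lt_iff₀ hD0]
    linarith
  linarith
end
end

section
/- Let (u_l, u_f) be a finite Stackelberg game with utilities in [0,1], n ≥ 2 follower actions, and inducibility gap Δ > 0. Then for every L > 1/Δ, the function u_RSE is L-Lipschitz on the interval (0, Δ − 1/L]: for all δ, δ' with 0 < δ ≤ δ' ≤ Δ − 1/L, one has |u_RSE(δ) − u_RSE(δ')| ≤ L·(δ' − δ). -/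
open Finset Set

noncomputable section

theorem aux_mixU_nonneg {m n : ℕ} (u : Fin m → Fin n → ℝ) (hu : ∀ i j, u i j ∈ Set.Icc (0:ℝ) 1)
    (x : Fin m → ℝ) (hx : x ∈ simplex m) (j : Fin n) : 0 ≤ mixU u x j :=
  Finset.sum_nonneg fun i _ => mul_nonneg (hx.1 i) (hu i j).1

theorem aux_mixU_le_one {m n : ℕ} (u : Fin m → Fin n → ℝ) (hu : ∀ i j, u i j ∈ Set.Icc (0:ℝ) 1)
    (x : Fin m → ℝ) (hx : x ∈ simplex m) (j : Fin n) : mixU u x j ≤ 1 := by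
  rw [← hx.2]
  exact Finset.sum_le_sum fun i _ => mul_le_of_le_one_right (hx.1 i) (hu i j).2

theorem aux_mixU_comb {m n : ℕ} (u : Fin m → Fin n → ℝ) (x z : Fin m → ℝ) (a b : ℝ) (j : Fin n) :
    mixU u (a • x + b • z) j = a * mixU u x j + b * mixU u z j := by
  simp only [mixU, Finset.mul_sum, ← Finset.sum_add_distrib]
  refine Finset.sum_congr rfl fun i _ => ?_
  simp only [Pi.add_apply, Pi.smul_apply, smul_eq_mul]
  ring

theorem aux_exists_best {m n : ℕ} (hn : 2 ≤ n) (uf : Fin m → Fin n → ℝ) (x : Fin m → ℝ) :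
    ∃ j, mixU uf x j = ⨆ j', mixU uf x j' := by
  haveI : Nonempty (Fin n) := ⟨⟨0, by omega⟩⟩
  exact exists_eq_ciSup_of_finite

theorem aux_le_sup {m n : ℕ} (uf : Fin m → Fin n → ℝ) (x : Fin m → ℝ) (j : Fin n) :
    mixU uf x j ≤ ⨆ j', mixU uf x j' :=
  le_ciSup (f := fun j' => mixU uf x j') (Set.finite_range _).bddAbove j

theorem aux_BR_nonempty {m n : ℕ} (hn : 2 ≤ n) (uf : Fin m → Fin n → ℝ) (x : Fin m → ℝ)
    (δ : ℝ) (h : 0 < δ) : (BRd uf δ x).Nonempty := by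
  obtain ⟨j, hj⟩ := aux_exists_best hn uf x
  refine ⟨j, ?_⟩
  show mixU uf x j > (⨆ j', mixU uf x j') - δ
  linarith

theorem aux_val_le {m n : ℕ} (ul uf : Fin m → Fin n → ℝ) (x : Fin m → ℝ)
    (δ : ℝ) (j : Fin n) (hj : j ∈ BRd uf δ x) : valBR ul uf δ x ≤ mixU ul x j :=
  csInf_le ((Set.toFinite _).image _).bddBelow (Set.mem_image_of_mem _ hj)

theorem aux_le_val {m n : ℕ} (hn : 2 ≤ n) (ul uf : Fin m → Fin n → ℝ) (x : Fin m → ℝ)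
    (δ : ℝ) (h : 0 < δ) (c : ℝ) (hc : ∀ j ∈ BRd uf δ x, c ≤ mixU ul x j) :
    c ≤ valBR ul uf δ x := by
  refine le_csInf ((aux_BR_nonempty hn uf x δ h).image _) ?_
  rintro _ ⟨j, hj, rfl⟩
  exact hc j hj

theorem aux_val_le_one {m n : ℕ} (hn : 2 ≤ n) (ul uf : Fin m → Fin n → ℝ)
    (hul : ∀ i j, ul i j ∈ Set.Icc (0:ℝ) 1) (x : Fin m → ℝ) (hx : x ∈ simplex m)
    (δ : ℝ) (h : 0 < δ) : valBR ul uf δ x ≤ 1 := by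
  obtain ⟨j, hj⟩ := aux_BR_nonempty hn uf x δ h
  exact (aux_val_le ul uf x δ j hj).trans (aux_mixU_le_one ul hul x hx j)

theorem aux_uRSE_nonneg {m n : ℕ} (hn : 2 ≤ n) (ul uf : Fin m → Fin n → ℝ)
    (hul : ∀ i j, ul i j ∈ Set.Icc (0:ℝ) 1) (δ : ℝ) (h : 0 < δ) : 0 ≤ uRSE ul uf δ := by
  refine Real.sSup_nonneg ?_
  rintro _ ⟨x, hx, rfl⟩
  exact aux_le_val hn ul uf x δ h 0 fun j _ => aux_mixU_nonneg ul hul x hx j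

theorem aux_val_le_uRSE {m n : ℕ} (hn : 2 ≤ n) (ul uf : Fin m → Fin n → ℝ)
    (hul : ∀ i j, ul i j ∈ Set.Icc (0:ℝ) 1) (x : Fin m → ℝ) (hx : x ∈ simplex m)
    (δ : ℝ) (h : 0 < δ) : valBR ul uf δ x ≤ uRSE ul uf δ := by
  refine le_csSup ⟨1, ?_⟩ (Set.mem_image_of_mem _ hx)
  rintro _ ⟨z, hz, rfl⟩
  exact aux_val_le_one hn ul uf hul z hz δ h

theorem aux_induce {m n : ℕ} (uf : Fin m → Fin n → ℝ) (hΔ : 0 < indGap uf) (G : ℝ)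
    (hG : G < indGap uf) (j : Fin n) :
    ∃ z ∈ simplex m, ∀ k, k ≠ j → G ≤ mixU uf z j - mixU uf z k := by
  have hle : indGap uf ≤ sSup ((fun x => ⨅ j' : {k : Fin n // k ≠ j},
      (mixU uf x j - mixU uf x j'.1)) '' simplex m) :=
    ciInf_le (Set.finite_range _).bddBelow j
  have hne : ((fun x => ⨅ j' : {k : Fin n // k ≠ j},
      (mixU uf x j - mixU uf x j'.1)) '' simplex m).Nonempty := by
    by_contra hemp
    rw [Set.not_nonempty_iff_eq_empty] at hemp
    rw [hemp, Real.sSup_empty] at hle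
    linarith
  obtain ⟨_, ⟨z, hz, rfl⟩, hlt⟩ := exists_lt_of_lt_csSup hne (hG.trans_le hle)
  refine ⟨z, hz, fun k hk => hlt.le.trans ?_⟩
  exact ciInf_le (f := fun j' : {k : Fin n // k ≠ j} => mixU uf z j - mixU uf z j'.1)
    (Set.finite_range _).bddBelow ⟨k, hk⟩

/-- `u_RSE` is `L`-Lipschitz on `(0, Δ − 1/L]` for every `L > 1/Δ`. -/
theorem uRSE_lipschitz (m n : ℕ) (hn : 2 ≤ n) (ul uf : Fin m → Fin n → ℝ)
    (hul : ∀ i j, ul i j ∈ Set.Icc (0:ℝ) 1) (huf : ∀ i j, uf i j ∈ Set.Icc (0:ℝ) 1)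
    (hΔ : 0 < indGap uf) (L : ℝ) (hL : 1 / indGap uf < L)
    (δ δ' : ℝ) (h1 : 0 < δ) (h2 : δ ≤ δ') (h3 : δ' ≤ indGap uf - 1 / L) :
    |uRSE ul uf δ - uRSE ul uf δ'| ≤ L * (δ' - δ) := by
  have h1' : 0 < δ' := h1.trans_le h2
  have hLpos : 0 < L := (one_div_pos.mpr hΔ).trans hL
  have hmono : uRSE ul uf δ' ≤ uRSE ul uf δ := by
    refine Real.sSup_le ?_ (aux_uRSE_nonneg hn ul uf hul δ h1)
    rintro _ ⟨x, hx, rfl⟩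
    refine le_trans ?_ (aux_val_le_uRSE hn ul uf hul x hx δ h1)
    refine aux_le_val hn ul uf x δ h1 _ fun j hj => aux_val_le ul uf x δ' j ?_
    have hj' : mixU uf x j > (⨆ j', mixU uf x j') - δ := hj
    show mixU uf x j > (⨆ j', mixU uf x j') - δ'
    linarith
  rw [abs_of_nonneg (sub_nonneg.mpr hmono)]
  rcases h2.eq_or_lt with rfl | hlt
  · simp
  have ht0 : 0 ≤ L * (δ' - δ) := mul_nonneg hLpos.le (by linarith)
  have hR := aux_uRSE_nonneg hn ul uf hul δ' h1'
  suffices h : uRSE ul uf δ ≤ uRSE ul uf δ' + L * (δ' - δ) by linarith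
  refine Real.sSup_le ?_ (by linarith)
  rintro _ ⟨x, hx, rfl⟩
  have hv1 := aux_val_le_one hn ul uf hul x hx δ h1
  by_cases ht1 : 1 ≤ L * (δ' - δ)
  · linarith
  push Not at ht1
  obtain ⟨j, hj⟩ := aux_exists_best hn uf x
  obtain ⟨z, hz, hzk⟩ := aux_induce uf hΔ (indGap uf - (δ' - δ)) (by linarith) j
  have hkey : δ' ≤ (1 - L * (δ' - δ)) * δ + L * (δ' - δ) * (indGap uf - (δ' - δ)) := by
    have e1 : L * (δ' - δ) * (1 / L) ≤ L * (δ' - δ) * (indGap uf - (δ' - δ) - δ) :=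
      mul_le_mul_of_nonneg_left (by linarith) ht0
    have e2 : L * (δ' - δ) * (1 / L) = δ' - δ := by field_simp
    nlinarith
  set t := L * (δ' - δ) with ht
  have hy : (1 - t) • x + t • z ∈ simplex m :=
    convex_stdSimplex ℝ (Fin m) hx hz (by linarith) ht0 (by ring)
  have hval : valBR ul uf δ x - t ≤ valBR ul uf δ' ((1 - t) • x + t • z) := by
    refine aux_le_val hn ul uf _ δ' h1' _ fun k hk => ?_
    have hkx : k ∈ BRd uf δ x := by
      by_contra hnk
      have hnk' : ¬ (mixU uf x k > (⨆ j', mixU uf x j') - δ) := hnk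
      have hk' : mixU uf ((1 - t) • x + t • z) k >
        (⨆ j', mixU uf ((1 - t) • x + t • z) j') - δ' := hk
      have hs := aux_le_sup uf ((1 - t) • x + t • z) j
      have hkj : k ≠ j := by
        rintro rfl
        exact hnk' (by linarith)
      have hz' := hzk k hkj
      rw [aux_mixU_comb] at hk' hs
      have e1 : (1 - t) * δ ≤ (1 - t) * (mixU uf x j - mixU uf x k) :=
        mul_le_mul_of_nonneg_left (by linarith) (by linarith)
      have e2 := mul_le_mul_of_nonneg_left hz' ht0
      linarith
    have hvk := aux_val_le ul uf x δ k hkx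
    have hzn := mul_nonneg ht0 (aux_mixU_nonneg ul hul z hz k)
    have e3 := mul_nonneg ht0 (sub_nonneg.mpr (aux_mixU_le_one ul hul x hx k))
    rw [aux_mixU_comb]
    linarith
  have := aux_val_le_uRSE hn ul uf hul _ hy δ' h1'
  linarith
end
end

section
/- For all real numbers c, δ with 0 < c < δ < 1, there exists a finite Stackelberg game (u_l, u_f) with m = 3 leader actions, n = 2 follower actions, utilities in [0,1], and inducibility gap Δ satisfying δ < Δ, such that every δ-RSE leader strategy x* (i.e., every x* ∈ Δ^m attaining u_RSE(δ)) satisfies max_{j ∈ BR_δ(x*)} u_l(x*, j) − min_{j ∈ BR_δ(x*)} u_l(x*, j) ≥ c. In particular, the follower's tie-breaking rule over the δ-optimal response set changes the leader's payoff by at least c at every δ-RSE. -/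
open Finset Set

noncomputable section

lemma iSup_fin_two (f : Fin 2 → ℝ) : (⨆ j, f j) = max (f 0) (f 1) := by
  apply le_antisymm
  · apply ciSup_le
    intro j
    fin_cases j
    · exact le_max_left _ _
    · exact le_max_right _ _
  · exact max_le (le_ciSup (Set.finite_range f).bddAbove 0)
      (le_ciSup (Set.finite_range f).bddAbove 1)

/-- leader utilities of the example -/
def exL (c : ℝ) : Fin 3 → Fin 2 → ℝ := ![![0, 0], ![0, 0], ![1, 1 - c]]

/-- follower utilities of the example -/
def exF : Fin 3 → Fin 2 → ℝ := ![![1, 0], ![0, 1], ![0, 0]]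

lemma exL_zero (c : ℝ) (x : Fin 3 → ℝ) : mixU (exL c) x 0 = x 2 := by
  simp [mixU, exL, Fin.sum_univ_three]

lemma exL_one (c : ℝ) (x : Fin 3 → ℝ) : mixU (exL c) x 1 = x 2 * (1 - c) := by
  simp [mixU, exL, Fin.sum_univ_three]

lemma exF_zero (x : Fin 3 → ℝ) : mixU exF x 0 = x 0 := by
  simp [mixU, exF, Fin.sum_univ_three]

lemma exF_one (x : Fin 3 → ℝ) : mixU exF x 1 = x 1 := by
  simp [mixU, exF, Fin.sum_univ_three]

lemma mem_BR_zero (δ : ℝ) (x : Fin 3 → ℝ) :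
    (0 : Fin 2) ∈ BRd exF δ x ↔ max (x 0) (x 1) - δ < x 0 := by
  simp only [BRd, Set.mem_ofPred_eq, iSup_fin_two, exF_zero, exF_one, gt_iff_lt]

lemma mem_BR_one (δ : ℝ) (x : Fin 3 → ℝ) :
    (1 : Fin 2) ∈ BRd exF δ x ↔ max (x 0) (x 1) - δ < x 1 := by
  simp only [BRd, Set.mem_ofPred_eq, iSup_fin_two, exF_zero, exF_one, gt_iff_lt]

lemma simplex_three {x : Fin 3 → ℝ} (hx : x ∈ simplex 3) :
    0 ≤ x 0 ∧ 0 ≤ x 1 ∧ 0 ≤ x 2 ∧ x 0 + x 1 + x 2 = 1 := by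
  refine ⟨hx.1 0, hx.1 1, hx.1 2, ?_⟩
  have := hx.2
  rwa [Fin.sum_univ_three] at this

lemma single_mem (i : Fin 3) : (Pi.single i 1 : Fin 3 → ℝ) ∈ simplex 3 :=
  single_mem_stdSimplex ℝ i

lemma valBR_le {c δ : ℝ} {x : Fin 3 → ℝ} {j : Fin 2} (h : j ∈ BRd exF δ x) :
    valBR (exL c) exF δ x ≤ mixU (exL c) x j :=
  csInf_le (Set.toFinite _).bddBelow (Set.mem_image_of_mem _ h)

/-- Dichotomy bound on the value of a strategy. -/
lemma valBR_cases {c δ : ℝ} (hδ : 0 < δ) {x : Fin 3 → ℝ} (hx : x ∈ simplex 3) :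
    valBR (exL c) exF δ x ≤ x 2 * (1 - c) ∨ valBR (exL c) exF δ x ≤ 1 - δ := by
  obtain ⟨h0, h1, h2, hs⟩ := simplex_three hx
  by_cases h : (1 : Fin 2) ∈ BRd exF δ x
  · left
    rw [← exL_one]
    exact valBR_le h
  · right
    rw [mem_BR_one, not_lt] at h
    have hm : (0 : Fin 2) ∈ BRd exF δ x := by
      rw [mem_BR_zero]
      rcases max_cases (x 0) (x 1) with ⟨e, _⟩ | ⟨e, _⟩ <;> rw [e] at h ⊢ <;> linarith
    have := valBR_le (c := c) hm
    rw [exL_zero] at this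
    rcases max_cases (x 0) (x 1) with ⟨e, _⟩ | ⟨e, _⟩ <;> rw [e] at h <;> linarith

lemma exF_gap : 1 ≤ indGap exF := by
  have key : ∀ (j k : Fin 2) (i : Fin 3), (∀ l : Fin 2, l ≠ j → l = k) → k ≠ j →
      mixU exF (Pi.single i 1) j - mixU exF (Pi.single i 1) k = 1 →
      (∀ x ∈ simplex 3, mixU exF x j - mixU exF x k ≤ 1) →
      1 ≤ sSup ((fun x => ⨅ j' : {k : Fin 2 // k ≠ j},
        (mixU exF x j - mixU exF x j'.1)) '' simplex 3) := by
    intro j k i hk hkj he hb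
    have hconst : ∀ x : Fin 3 → ℝ, (⨅ j' : {k : Fin 2 // k ≠ j},
        (mixU exF x j - mixU exF x j'.1)) = mixU exF x j - mixU exF x k := by
      intro x
      haveI : Nonempty {k : Fin 2 // k ≠ j} := ⟨⟨k, hkj⟩⟩
      have : ∀ j' : {k : Fin 2 // k ≠ j},
          mixU exF x j - mixU exF x j'.1 = mixU exF x j - mixU exF x k := by
        intro j'
        rw [hk j'.1 j'.2]
      simp only [this, ciInf_const]
    simp only [hconst]
    apply le_csSup
    · refine ⟨1, ?_⟩
      rintro _ ⟨x, hx, rfl⟩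
      exact hb x hx
    · exact ⟨_, single_mem i, he⟩
  apply le_ciInf
  intro j
  fin_cases j
  · refine key 0 1 0 (by decide) (by decide) ?_ ?_
    · simp [exF_zero, exF_one]
    · intro x hx
      obtain ⟨h0, h1, h2, hs⟩ := simplex_three hx
      rw [exF_zero, exF_one]
      linarith
  · refine key 1 0 1 (by decide) (by decide) ?_ ?_
    · simp [exF_zero, exF_one]
    · intro x hx
      obtain ⟨h0, h1, h2, hs⟩ := simplex_three hx
      rw [exF_zero, exF_one]
      linarith

/-- the follower's tie-breaking rule matters for δ-RSE. -/
theorem tie_breaking_matters (c δ : ℝ) (hc : 0 < c) (hcδ : c < δ) (hδ : δ < 1) :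
    ∃ (ul uf : Fin 3 → Fin 2 → ℝ),
      (∀ i j, ul i j ∈ Set.Icc (0:ℝ) 1) ∧ (∀ i j, uf i j ∈ Set.Icc (0:ℝ) 1) ∧
      δ < indGap uf ∧
      ∀ x ∈ simplex 3, valBR ul uf δ x = uRSE ul uf δ →
        c ≤ sSup (mixU ul x '' BRd uf δ x) - sInf (mixU ul x '' BRd uf δ x) := by
  have hδ0 : 0 < δ := hc.trans hcδ
  refine ⟨exL c, exF, ?_, ?_, lt_of_lt_of_le hδ exF_gap, ?_⟩
  · intro i j
    fin_cases i <;> fin_cases j <;> simp [exL] <;> constructor <;> linarith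
  · intro i j
    fin_cases i <;> fin_cases j <;> simp [exF]
  · intro x hx hval
    obtain ⟨h0, h1, h2, hs⟩ := simplex_three hx
    -- the pure strategy 2 guarantees `1 - c`
    have hlow : 1 - c ≤ valBR (exL c) exF δ (Pi.single 2 1) := by
      apply le_csInf
      · refine ⟨_, Set.mem_image_of_mem _ ((mem_BR_zero δ _).2 ?_)⟩
        simp [hδ0]
      · rintro _ ⟨j, -, rfl⟩
        fin_cases j
        · change _ ≤ mixU (exL c) _ 0
          rw [exL_zero]
          simp [hc.le]
        · change _ ≤ mixU (exL c) _ 1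
          rw [exL_one]
          simp
    have hR : 1 - c ≤ uRSE (exL c) exF δ := by
      refine hlow.trans (le_csSup ⟨1, ?_⟩ (Set.mem_image_of_mem _ (single_mem 2)))
      rintro _ ⟨y, hy, rfl⟩
      obtain ⟨g0, g1, g2, gs⟩ := simplex_three hy
      rcases valBR_cases (c := c) hδ0 hy with h | h
      · nlinarith
      · linarith
    rw [← hval] at hR
    have hx2 : x 2 = 1 := by
      rcases valBR_cases (c := c) hδ0 hx with h | h
      · nlinarith
      · linarith
    have e0 : x 0 = 0 := by linarith
    have e1 : x 1 = 0 := by linarith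
    have m0 : (0 : Fin 2) ∈ BRd exF δ x := by
      rw [mem_BR_zero, e0, e1]
      simp [hδ0]
    have m1 : (1 : Fin 2) ∈ BRd exF δ x := by
      rw [mem_BR_one, e0, e1]
      simp [hδ0]
    have hsup := le_csSup (Set.toFinite (mixU (exL c) x '' BRd exF δ x)).bddAbove
      (Set.mem_image_of_mem _ m0)
    have hinf := csInf_le (Set.toFinite (mixU (exL c) x '' BRd exF δ x)).bddBelow
      (Set.mem_image_of_mem _ m1)
    rw [exL_zero, hx2] at hsup
    rw [exL_one, hx2] at hinf
    linarith
end
end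

section
/- Let A : [m]×[n] → [0,1] be a payoff matrix. For any ε > 0 and any mixed strategy x ∈ Δ^m, setting k = ⌈log(2n)/(2ε²)⌉, there exists a k-uniform mixed strategy x̄ ∈ Δ^m (i.e., every coordinate of x̄ is an integer multiple of 1/k) such that |Σ_i x_i·A(i, j) − Σ_i x̄_i·A(i, j)| ≤ ε for every j ∈ [n]. -/
open Finset Set

noncomputable section

open MeasureTheory ProbabilityTheory in
lemma hoeff_fin {m : ℕ} (x a : Fin m → ℝ) (hx : x ∈ stdSimplex ℝ (Fin m))
    (ha : ∀ i, a i ∈ Set.Icc (0:ℝ) 1) (t : ℝ) :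
    ∑ i, x i * Real.exp (t * (a i - ∑ i', x i' * a i')) ≤ Real.exp (t ^ 2 / 8) := by
  let μ : Measure (Fin m) := ∑ i, ENNReal.ofReal (x i) • Measure.dirac i
  have hint : ∀ f : Fin m → ℝ, ∫ i, f i ∂μ = ∑ i, x i * f i := by
    intro f
    rw [integral_finsetSum_measure]
    · refine Finset.sum_congr rfl fun i _ => ?_
      rw [integral_smul_measure, integral_dirac, ENNReal.toReal_ofReal (hx.1 i), smul_eq_mul]
    · intro i _
      exact (integrable_dirac (by simp)).smul_measure (by simp)
  have hp : IsProbabilityMeasure μ := by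
    constructor
    simp only [μ, Measure.finsetSum_apply, Measure.smul_apply, measure_univ, smul_eq_mul, mul_one]
    rw [← ENNReal.ofReal_sum_of_nonneg (fun i _ => hx.1 i), hx.2, ENNReal.ofReal_one]
  have h := (hasSubgaussianMGF_of_mem_Icc (μ := μ) (X := a) (a := 0) (b := 1)
    (measurable_of_finite a).aemeasurable (Filter.Eventually.of_forall ha)).mgf_le t
  rw [mgf, hint, hint] at h
  refine h.trans (le_of_eq ?_)
  congr 1
  simp
  ring

lemma exists_le_avg {m : ℕ} (x F : Fin m → ℝ) (hx : x ∈ stdSimplex ℝ (Fin m)) (C : ℝ)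
    (h : ∑ i, x i * F i ≤ C) : ∃ i, F i ≤ C := by
  by_contra hc
  push Not at hc
  have h1 : ∑ i, x i * (F i - C) ≤ 0 := by
    simp only [mul_sub, Finset.sum_sub_distrib, ← Finset.sum_mul, hx.2]
    linarith
  have h0 : ∀ i ∈ Finset.univ, 0 ≤ x i * (F i - C) :=
    fun i _ => mul_nonneg (hx.1 i) (sub_nonneg.2 (hc i).le)
  have h2 := (Finset.sum_eq_zero_iff_of_nonneg h0).1 (le_antisymm h1 (Finset.sum_nonneg h0))
  have h3 : ∀ i, x i = 0 := fun i =>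
    (mul_eq_zero.1 (h2 i (Finset.mem_univ i))).resolve_right (sub_pos.2 (hc i)).ne'
  have := hx.2
  simp [h3] at this

lemma counts_exist {m n : ℕ} (A : Fin m → Fin n → ℝ)
    (hA : ∀ i j, A i j ∈ Set.Icc (0:ℝ) 1) (x : Fin m → ℝ) (hx : x ∈ stdSimplex ℝ (Fin m))
    (t : ℝ) (k : ℕ) : ∃ c : Fin m → ℕ, ∑ i, c i = k ∧
      ∑ j, (Real.exp (t * (∑ i, (c i : ℝ) * A i j - k * mixU A x j)) +
        Real.exp (-t * (∑ i, (c i : ℝ) * A i j - k * mixU A x j)))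
        ≤ 2 * n * Real.exp (k * (t ^ 2 / 8)) := by
  induction k with
  | zero => exact ⟨0, by simp, by simp; linarith⟩
  | succ k ih =>
    obtain ⟨c, hc, hs⟩ := ih
    set D : Fin n → ℝ := fun j => ∑ i, (c i : ℝ) * A i j - k * mixU A x j with hD
    have key : ∑ i, x i * ∑ j, (Real.exp (t * (D j + (A i j - mixU A x j))) +
        Real.exp (-t * (D j + (A i j - mixU A x j))))
        ≤ 2 * n * Real.exp ((k + 1 : ℕ) * (t ^ 2 / 8)) := by
      have hb : ∀ s : ℝ, ∀ j, ∑ i, x i * Real.exp (s * (D j + (A i j - mixU A x j)))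
          ≤ Real.exp (s * D j) * Real.exp (s ^ 2 / 8) := by
        intro s j
        refine le_trans (le_of_eq ?_) (mul_le_mul_of_nonneg_left
          (hoeff_fin x (fun i => A i j) hx (fun i => hA i j) s) (Real.exp_pos _).le)
        rw [Finset.mul_sum]
        refine Finset.sum_congr rfl fun i _ => ?_
        rw [mul_add, Real.exp_add]
        simp only [mixU]
        ring
      calc _ = ∑ j, (∑ i, x i * Real.exp (t * (D j + (A i j - mixU A x j))) +
            ∑ i, x i * Real.exp (-t * (D j + (A i j - mixU A x j)))) := by
              simp only [Finset.mul_sum]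
              rw [Finset.sum_comm]
              simp only [mul_add, Finset.sum_add_distrib]
        _ ≤ ∑ j, (Real.exp (t * D j) * Real.exp (t ^ 2 / 8) +
            Real.exp (-t * D j) * Real.exp ((-t) ^ 2 / 8)) :=
              Finset.sum_le_sum fun j _ => add_le_add (hb t j) (hb (-t) j)
        _ = (∑ j, (Real.exp (t * D j) + Real.exp (-t * D j))) * Real.exp (t ^ 2 / 8) := by
              rw [Finset.sum_mul]
              refine Finset.sum_congr rfl fun j _ => ?_
              rw [neg_sq]; ring
        _ ≤ (2 * n * Real.exp (k * (t ^ 2 / 8))) * Real.exp (t ^ 2 / 8) :=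
              mul_le_mul_of_nonneg_right hs (Real.exp_pos _).le
        _ = _ := by
              rw [mul_assoc, ← Real.exp_add]; push_cast; ring_nf
    obtain ⟨i, hi⟩ := exists_le_avg x _ hx _ key
    refine ⟨c + Pi.single i 1, ?_, ?_⟩
    · simp [Finset.sum_add_distrib, hc]
    · refine le_trans (le_of_eq ?_) hi
      refine Finset.sum_congr rfl fun j _ => ?_
      have : ∑ i', ((c + Pi.single i 1 : Fin m → ℕ) i' : ℝ) * A i' j - (k + 1 : ℕ) * mixU A x j
          = D j + (A i j - mixU A x j) := by
        simp only [hD, Pi.add_apply, Nat.cast_add, add_mul, Finset.sum_add_distrib]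
        have : ∑ i', ((Pi.single i 1 : Fin m → ℕ) i' : ℝ) * A i' j = A i j := by
          rw [Finset.sum_eq_single i]
          · simp
          · intro b _ hb; simp [hb]
          · simp
        rw [this]; push_cast; ring
      rw [this]

/-- every mixed strategy is ε-approximated (in payoff, against every
column) by a k-uniform strategy with `k = ⌈log(2n)/(2ε²)⌉`. -/
theorem k_uniform_approx (m n : ℕ) (hn : 1 ≤ n) (A : Fin m → Fin n → ℝ)
    (hA : ∀ i j, A i j ∈ Set.Icc (0:ℝ) 1) (ε : ℝ) (hε : 0 < ε)
    (x : Fin m → ℝ) (hx : x ∈ simplex m)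
    (k : ℕ) (hk : k = ⌈Real.log (2 * n) / (2 * ε ^ 2)⌉₊) :
    ∃ xb ∈ simplex m, (∀ i, ∃ c : ℕ, xb i = (c : ℝ) / k) ∧
      ∀ j, |mixU A x j - mixU A xb j| ≤ ε := by
  have hn' : (1:ℝ) ≤ n := by exact_mod_cast hn
  have hL : 0 < Real.log (2 * n) := Real.log_pos (by linarith)
  have hkL : Real.log (2 * n) ≤ k * (2 * ε ^ 2) := by
    rw [hk, ← div_le_iff₀ (by positivity)]
    exact Nat.le_ceil _
  have hk0 : 0 < (k:ℝ) := by
    by_contra h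
    nlinarith [sq_nonneg ε]
  obtain ⟨c, hc, hs⟩ := counts_exist A hA x hx (4 * ε) k
  refine ⟨fun i => c i / k, ⟨fun i => by positivity, ?_⟩, fun i => ⟨c i, rfl⟩, fun j => ?_⟩
  · rw [← Finset.sum_div, ← Nat.cast_sum, hc, div_self hk0.ne']
  have e : mixU A (fun i => (c i : ℝ) / k) j = (∑ i, (c i : ℝ) * A i j) / k := by
    simp only [mixU, Finset.sum_div]
    exact Finset.sum_congr rfl fun i _ => by ring
  have hj := (Finset.single_le_sum (f := fun j =>
      (Real.exp (4 * ε * (∑ i, (c i : ℝ) * A i j - k * mixU A x j)) +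
        Real.exp (-(4 * ε) * (∑ i, (c i : ℝ) * A i j - k * mixU A x j))))
      (fun _ _ => by positivity) (Finset.mem_univ j)).trans hs
  have hR : 2 * n * Real.exp (k * ((4 * ε) ^ 2 / 8)) ≤ Real.exp (4 * ε * (k * ε)) := by
    rw [← Real.exp_log (show (0:ℝ) < 2 * n by linarith), ← Real.exp_add, Real.exp_le_exp]
    nlinarith
  set S := ∑ i, (c i : ℝ) * A i j
  set M := mixU A x j
  have h4 : 0 < 4 * ε := by linarith
  have h1 : S - k * M ≤ k * ε := by
    refine le_of_mul_le_mul_left (Real.exp_le_exp.1 ?_) h4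
    have := Real.exp_pos (-(4 * ε) * (S - k * M))
    linarith
  have h2 : -(S - k * M) ≤ k * ε := by
    refine le_of_mul_le_mul_left (Real.exp_le_exp.1 ?_) h4
    have := Real.exp_pos (4 * ε * (S - k * M))
    rw [mul_neg, ← neg_mul]
    linarith
  rw [e]
  have : M - S / k = -(S - k * M) / k := by field_simp; ring
  rw [this, abs_div, abs_of_pos hk0, div_le_iff₀ hk0, abs_le]
  constructor <;> linarith
end
end

section
/- Let u_l, u_f, ũ_f : [m]×[n] → [0,1] be utility matrices with ‖ũ_f − u_f‖_∞ ≤ ε (entrywise), and let δ > 0. Then the robust Stackelberg values satisfy sup_{x ∈ Δ^m} min_{j ∈ BR_δ(x; u_f)} u_l(x, j) ≥ sup_{x ∈ Δ^m} min_{j ∈ BR_{δ+2ε}(x; ũ_f)} u_l(x, j); that is, V*(u_l, u_f, δ) ≥ V*(u_l, ũ_f, δ + 2ε). -/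
open Finset Set

noncomputable section

/-- `V*(u_l, u_f, δ) ≥ V*(u_l, ũ_f, δ + 2ε)` when `‖ũ_f − u_f‖_∞ ≤ ε`. -/
theorem rse_value_perturbation (m n : ℕ) (ul uf tuf : Fin m → Fin n → ℝ)
    (hul : ∀ i j, ul i j ∈ Set.Icc (0:ℝ) 1) (huf : ∀ i j, uf i j ∈ Set.Icc (0:ℝ) 1)
    (htuf : ∀ i j, tuf i j ∈ Set.Icc (0:ℝ) 1)
    (ε : ℝ) (hnorm : ∀ i j, |tuf i j - uf i j| ≤ ε)
    (δ : ℝ) (hδ : 0 < δ) :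
    uRSE ul tuf (δ + 2 * ε) ≤ uRSE ul uf δ := by
  have mix_le : ∀ (x : Fin m → ℝ), x ∈ simplex m → ∀ (u v : Fin m → Fin n → ℝ) (c : ℝ),
      (∀ i j, u i j ≤ v i j + c) → ∀ j, mixU u x j ≤ mixU v x j + c := by
    intro x hx u v c h j
    obtain ⟨h0, h1⟩ := hx
    have h2 : ∑ i, x i * u i j ≤ ∑ i, x i * (v i j + c) :=
      Finset.sum_le_sum fun i _ => mul_le_mul_of_nonneg_left (h i j) (h0 i)
    have h3 : ∑ i, x i * (v i j + c) = ∑ i, x i * v i j + c := by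
      simp only [mul_add, Finset.sum_add_distrib, ← Finset.sum_mul, h1, one_mul]
    unfold mixU
    linarith
  rcases Nat.eq_zero_or_pos n with hn | hn
  · subst hn
    have h : valBR ul tuf (δ + 2 * ε) = valBR ul uf δ := by
      funext x
      simp only [valBR, Set.eq_empty_of_isEmpty]
    simp only [uRSE, h, le_refl]
  haveI : Nonempty (Fin n) := ⟨⟨0, hn⟩⟩
  have hne : ∀ x, (BRd uf δ x).Nonempty := by
    intro x
    obtain ⟨j, hj⟩ := exists_eq_ciSup_of_finite (f := mixU uf x)
    refine ⟨j, ?_⟩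
    show mixU uf x j > (⨆ j', mixU uf x j') - δ
    linarith
  have hbelow : ∀ (x : Fin m → ℝ) (s : Set (Fin n)), BddBelow (mixU ul x '' s) :=
    fun x s => (Set.toFinite _).bddBelow
  have key : ∀ x ∈ simplex m, valBR ul tuf (δ + 2 * ε) x ≤ valBR ul uf δ x := by
    intro x hx
    refine csInf_le_csInf (hbelow _ _) ((hne x).image _) (Set.image_mono ?_)
    intro j hj
    have hj' : mixU uf x j > (⨆ j', mixU uf x j') - δ := hj
    show mixU tuf x j > (⨆ j', mixU tuf x j') - (δ + 2 * ε)
    have h1 := mix_le x hx uf tuf ε (fun i j => by have := abs_le.1 (hnorm i j); linarith) j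
    have h2 : (⨆ j', mixU tuf x j') ≤ (⨆ j', mixU uf x j') + ε := by
      refine ciSup_le fun k => ?_
      have h3 := mix_le x hx tuf uf ε
        (fun i j => by have := abs_le.1 (hnorm i j); linarith) k
      have h4 := le_ciSup (Set.finite_range (mixU uf x)).bddAbove k
      linarith
    linarith
  have hbdd : BddAbove (valBR ul uf δ '' simplex m) := by
    refine ⟨1, ?_⟩
    rintro _ ⟨x, hx, rfl⟩
    obtain ⟨j, hj⟩ := hne x
    refine (csInf_le (hbelow _ _) (Set.mem_image_of_mem _ hj)).trans ?_
    have h := mix_le x hx ul (fun _ _ => 0) 1 (fun i j => by have := (hul i j).2; linarith) j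
    simpa [mixU] using h
  rcases (simplex m).eq_empty_or_nonempty with he | hs
  · simp [uRSE, he]
  refine csSup_le (hs.image _) ?_
  rintro _ ⟨x, hx, rfl⟩
  exact (key x hx).trans (le_csSup hbdd (Set.mem_image_of_mem _ hx))
end
end

section
/- Let (u_l, u_f) be a finite Stackelberg game with m = 2 leader actions, n ≥ 2 follower actions, utilities in [0,1], inducibility gap Δ > 0, and let δ ∈ (0, Δ). Then there exists a δ-RSE leader strategy x* (i.e., an x* ∈ Δ^m attaining u_RSE(δ)) such that max_{j ∈ BR_δ(x*)} u_l(x*, j) = min_{j ∈ BR_δ(x*)} u_l(x*, j); in other words, at some optimal leader strategy the leader's payoff is the same under every follower tie-breaking rule within the δ-optimal response set. -/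
open Finset Set

noncomputable section

open Topology Filter in
lemma rse_mem_BRd {m n : ℕ} (hn : 2 ≤ n) (uf : Fin m → Fin n → ℝ) (δ : ℝ) (x : Fin m → ℝ) (j : Fin n) :
    j ∈ BRd uf δ x ↔ ∀ k, mixU uf x k - δ < mixU uf x j := by
  haveI : Nonempty (Fin n) := ⟨⟨0, by omega⟩⟩
  unfold BRd
  simp only [Set.mem_setOf_eq, gt_iff_lt]
  constructor
  · intro h k
    have := le_ciSup (Set.finite_range (fun j' => mixU uf x j')).bddAbove k
    linarith
  · intro h
    obtain ⟨k, hk⟩ := exists_eq_ciSup_of_finite (f := fun j' => mixU uf x j')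
    rw [← hk]
    exact h k

lemma rse_BRd_nonempty {m n : ℕ} (hn : 2 ≤ n) (uf : Fin m → Fin n → ℝ) (δ : ℝ) (hδ : 0 < δ)
    (x : Fin m → ℝ) : (BRd uf δ x).Nonempty := by
  haveI : Nonempty (Fin n) := ⟨⟨0, by omega⟩⟩
  obtain ⟨k, hk⟩ := exists_eq_ciSup_of_finite (f := fun j' => mixU uf x j')
  refine ⟨k, ?_⟩
  unfold BRd
  simp only [Set.mem_setOf_eq, gt_iff_lt]
  rw [← hk]
  linarith

lemma rse_val_le {m n : ℕ} (ul uf : Fin m → Fin n → ℝ) (δ : ℝ)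
    (x : Fin m → ℝ) (j : Fin n) (hj : j ∈ BRd uf δ x) : valBR ul uf δ x ≤ mixU ul x j :=
  csInf_le (Set.toFinite _).bddBelow (Set.mem_image_of_mem _ hj)

lemma rse_val_mem {m n : ℕ} (hn : 2 ≤ n) (ul uf : Fin m → Fin n → ℝ) (δ : ℝ) (hδ : 0 < δ)
    (x : Fin m → ℝ) : ∃ j ∈ BRd uf δ x, mixU ul x j = valBR ul uf δ x :=
  ((rse_BRd_nonempty hn uf δ hδ x).image (mixU ul x)).csInf_mem (Set.toFinite _)

lemma rse_cont {m n : ℕ} (u : Fin m → Fin n → ℝ) (j : Fin n) : Continuous fun x => mixU u x j := by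
  unfold mixU
  fun_prop

open Topology Filter in
lemma rse_exists_max {n : ℕ} (hn : 2 ≤ n) (ul uf : Fin 2 → Fin n → ℝ) (δ : ℝ) (hδ : 0 < δ) :
    ∃ x ∈ simplex 2, ∀ y ∈ simplex 2, valBR ul uf δ y ≤ valBR ul uf δ x := by
  have husc : UpperSemicontinuousOn (valBR ul uf δ) (simplex 2) := by
    intro x _ y hy
    obtain ⟨j, hj, hje⟩ := rse_val_mem hn ul uf δ hδ x
    apply Filter.Eventually.filter_mono nhdsWithin_le_nhds
    rw [rse_mem_BRd hn] at hj
    have h1 : ∀ᶠ x' in 𝓝 x, ∀ k, mixU uf x' k - δ < mixU uf x' j := by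
      rw [Filter.eventually_all]
      intro k
      exact (((rse_cont uf k).sub continuous_const).continuousAt).eventually_lt
        (rse_cont uf j).continuousAt (hj k)
    have h2 : ∀ᶠ x' in 𝓝 x, mixU ul x' j < y :=
      (rse_cont ul j).continuousAt.eventually_lt continuousAt_const (by rw [hje]; exact hy)
    filter_upwards [h1, h2] with x' h1 h2
    exact lt_of_le_of_lt (rse_val_le ul uf δ x' j ((rse_mem_BRd hn uf δ x' j).2 h1)) h2
  have hne : (simplex 2).Nonempty := ⟨_, single_mem_stdSimplex ℝ (0 : Fin 2)⟩
  obtain ⟨x, hx, hmax⟩ := husc.exists_isMaxOn hne (isCompact_stdSimplex ℝ (Fin 2))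
  exact ⟨x, hx, fun y hy => hmax hy⟩

lemma rse_gap_points {n : ℕ} (hn : 2 ≤ n) (uf : Fin 2 → Fin n → ℝ) (δ : ℝ)
    (hδΔ : δ < indGap uf) (j : Fin n) :
    ∃ x ∈ simplex 2, ∀ k, k ≠ j → mixU uf x k + δ ≤ mixU uf x j := by
  have hne : (simplex 2).Nonempty := ⟨_, single_mem_stdSimplex ℝ (0 : Fin 2)⟩
  have h1 := lt_of_lt_of_le hδΔ (ciInf_le (Set.finite_range _).bddBelow j)
  obtain ⟨_, ⟨x, hx, rfl⟩, h2⟩ := exists_lt_of_lt_csSup (hne.image _) h1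
  refine ⟨x, hx, fun k hk => ?_⟩
  have h3 := lt_of_lt_of_le h2 (ciInf_le (Set.finite_range _).bddBelow (⟨k, hk⟩ : {k : Fin n // k ≠ j}))
  simp only at h3
  linarith

lemma rse_mix {n : ℕ} (u : Fin 2 → Fin n → ℝ) (x : Fin 2 → ℝ) (hx : x ∈ simplex 2) (j : Fin n) :
    mixU u x j = u 0 j + x 1 * (u 1 j - u 0 j) := by
  have h : x 0 + x 1 = 1 := by simpa [Fin.sum_univ_two] using hx.2
  have h' : x 0 = 1 - x 1 := by linarith
  simp only [mixU, Fin.sum_univ_two, h']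
  ring

/-- A strategy where all δ-optimal responses give the same payoff. -/
lemma rse_good {n : ℕ} (hn : 2 ≤ n) (ul uf : Fin 2 → Fin n → ℝ) (δ : ℝ) (hδ : 0 < δ)
    (x : Fin 2 → ℝ) (c : ℝ) (h : ∀ j ∈ BRd uf δ x, mixU ul x j = c) :
    valBR ul uf δ x = c ∧
      sSup (mixU ul x '' BRd uf δ x) = sInf (mixU ul x '' BRd uf δ x) := by
  have him : mixU ul x '' BRd uf δ x = {c} := by
    apply Set.Subset.antisymm
    · rintro _ ⟨j, hj, rfl⟩
      exact h j hj
    · rintro _ rfl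
      obtain ⟨j, hj⟩ := rse_BRd_nonempty hn uf δ hδ x
      exact ⟨j, hj, h j hj⟩
  unfold valBR
  rw [him]
  simp

/-- If an affine function is `≥ δ` at `q` and `≤ -δ` at `p` with `p < q`, it is `≥ δ` right of `q`. -/
lemma rse_affine_right {a b p q t δ : ℝ} (hδ : 0 < δ) (hp : a + p * b ≤ -δ) (hq : δ ≤ a + q * b)
    (hpq : p ≤ q) (hqt : q ≤ t) : δ ≤ a + t * b := by
  have hb : 0 ≤ b := by
    by_contra hb
    nlinarith
  nlinarith

lemma rse_affine_left {a b p q t δ : ℝ} (hδ : 0 < δ) (hp : a + p * b ≤ -δ) (hq : δ ≤ a + q * b)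
    (hpq : q ≤ p) (hqt : t ≤ q) : δ ≤ a + t * b := by
  have hb : b ≤ 0 := by
    by_contra hb
    nlinarith
  nlinarith

lemma rse_pair {n : ℕ} (hn : 2 ≤ n) (ul uf : Fin 2 → Fin n → ℝ) (δ : ℝ) (hδ : 0 < δ)
    (p : Fin n → Fin 2 → ℝ) (hp : ∀ j, p j ∈ simplex 2)
    (hpg : ∀ j k, k ≠ j → mixU uf (p j) k + δ ≤ mixU uf (p j) j)
    (x : Fin 2 → ℝ) (hx : x ∈ simplex 2) (j k : Fin n) (hjk : j ≠ k)
    (hj : j ∈ BRd uf δ x) (hk : k ∈ BRd uf δ x) (hle : p j 1 ≤ p k 1) :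
    ∃ y ∈ simplex 2, ∃ c, valBR ul uf δ x ≤ c ∧ ∀ l ∈ BRd uf δ y, mixU ul y l = c := by
  have hVj := rse_val_le ul uf δ x j hj
  have hVk := rse_val_le ul uf δ x k hk
  simp only [rse_mem_BRd hn] at hj hk ⊢
  have hself : ∀ j l, (∀ k, mixU uf (p j) k - δ < mixU uf (p j) l) → l = j := by
    intro j l h
    by_contra hne
    have := h j
    have := hpg j l hne
    linarith
  -- domination facts
  have hright : ∀ a b, a ≠ b → p a 1 ≤ p b 1 → ∀ y ∈ simplex 2, p b 1 ≤ y 1 →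
      mixU uf y a + δ ≤ mixU uf y b := by
    intro a b hab hle y hy hby
    have h1 := hpg a b hab.symm
    have h2 := hpg b a hab
    rw [rse_mix _ _ (hp _), rse_mix _ _ (hp _)] at h1 h2
    rw [rse_mix _ _ hy, rse_mix _ _ hy]
    have := rse_affine_right (a := uf 0 b - uf 0 a) (b := (uf 1 b - uf 0 b) - (uf 1 a - uf 0 a))
      (p := p a 1) (q := p b 1) (t := y 1) hδ (by linarith) (by linarith) hle hby
    linarith
  have hleft : ∀ a b, a ≠ b → p b 1 ≤ p a 1 → ∀ y ∈ simplex 2, y 1 ≤ p b 1 →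
      mixU uf y a + δ ≤ mixU uf y b := by
    intro a b hab hle y hy hby
    have h1 := hpg a b hab.symm
    have h2 := hpg b a hab
    rw [rse_mix _ _ (hp _), rse_mix _ _ (hp _)] at h1 h2
    rw [rse_mix _ _ hy, rse_mix _ _ hy]
    have := rse_affine_left (a := uf 0 b - uf 0 a) (b := (uf 1 b - uf 0 b) - (uf 1 a - uf 0 a))
      (p := p a 1) (q := p b 1) (t := y 1) hδ (by linarith) (by linarith) hle hby
    linarith
  have hjx : p j 1 ≤ x 1 := by
    by_contra h
    have := hleft k j hjk.symm hle x hx (by linarith)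
    have := hk j
    linarith
  have hxk : x 1 ≤ p k 1 := by
    by_contra h
    have := hright j k hjk hle x hx (by linarith)
    have := hj k
    linarith
  have hsub : ∀ y ∈ simplex 2, p j 1 ≤ y 1 → y 1 ≤ p k 1 → ∀ l,
      (∀ k, mixU uf y k - δ < mixU uf y l) → l = j ∨ l = k := by
    intro y hy hjy hyk l hl
    by_contra hcon
    push Not at hcon
    obtain ⟨hlj, hlk⟩ := hcon
    rcases le_total (p l 1) (x 1) with h | h
    · rcases le_total (p l 1) (p j 1) with h' | h'
      · have := hright l j hlj h' y hy hjy
        have := hl j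
        linarith
      · have := hright j l hlj.symm h' x hx h
        have := hj l
        linarith
    · rcases le_total (p l 1) (p k 1) with h' | h'
      · have := hleft k l hlk.symm h' x hx h
        have := hk l
        linarith
      · have := hleft l k hlk h' y hy hyk
        have := hl k
        linarith
  by_cases h1 : valBR ul uf δ x ≤ mixU ul (p j) j
  · refine ⟨p j, hp j, _, h1, fun l hl => ?_⟩
    rw [hself j l hl]
  by_cases h2 : valBR ul uf δ x ≤ mixU ul (p k) k
  · refine ⟨p k, hp k, _, h2, fun l hl => ?_⟩
    rw [hself k l hl]
  push Not at h1 h2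
  rw [rse_mix _ _ (hp _)] at h1 h2
  rw [rse_mix _ _ hx] at hVj hVk
  set V := valBR ul uf δ x
  -- slopes
  generalize hB : ul 1 j - ul 0 j = B at *
  generalize hD : ul 1 k - ul 0 k = D at *
  have hBpos : 0 < B := by
    by_contra h
    nlinarith
  have hDneg : D < 0 := by
    by_contra h
    nlinarith
  have hBD : 0 < B - D := by linarith
  obtain ⟨c, hc⟩ : ∃ c, c * (B - D) = ul 0 k - ul 0 j := ⟨(ul 0 k - ul 0 j) / (B - D), by field_simp⟩
  have hjc : p j 1 ≤ c := by
    by_contra h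
    nlinarith
  have hck : c ≤ p k 1 := by
    by_contra h
    nlinarith
  have hp0 : 0 ≤ p j 1 := (hp j).1 1
  have hp1 : p k 1 ≤ 1 := by
    have h0 : 0 ≤ p k 0 := (hp k).1 0
    have h : p k 0 + p k 1 = 1 := by simpa [Fin.sum_univ_two] using (hp k).2
    linarith
  have hy : ![1 - c, c] ∈ simplex 2 := by
    constructor
    · intro i
      fin_cases i
      · simp; linarith
      · simp; linarith
    · simp [Fin.sum_univ_two]
  refine ⟨![1 - c, c], hy, ul 0 j + c * B, ?_, fun l hl => ?_⟩
  · rcases le_total (x 1) c with h | h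
    · nlinarith
    · nlinarith
  · rw [rse_mix _ _ hy]
    rcases hsub _ hy (by simpa using hjc) (by simpa using hck) l hl with rfl | rfl
    · simp [hB]
    · simp [hD]
      linarith

/-- when `m = 2` and `0 < δ < Δ`, some δ-RSE leader strategy has the same
leader payoff under every tie-breaking rule within the δ-optimal response set. -/
theorem exists_rse_tie_breaking_free (n : ℕ) (hn : 2 ≤ n) (ul uf : Fin 2 → Fin n → ℝ)
    (hul : ∀ i j, ul i j ∈ Set.Icc (0:ℝ) 1) (huf : ∀ i j, uf i j ∈ Set.Icc (0:ℝ) 1)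
    (hΔ : 0 < indGap uf) (δ : ℝ) (hδ : 0 < δ) (hδΔ : δ < indGap uf) :
    ∃ x ∈ simplex 2, valBR ul uf δ x = uRSE ul uf δ ∧
      sSup (mixU ul x '' BRd uf δ x) = sInf (mixU ul x '' BRd uf δ x) := by
  obtain ⟨x, hx, hmax⟩ := rse_exists_max hn ul uf δ hδ
  have hR : uRSE ul uf δ = valBR ul uf δ x := by
    apply IsGreatest.csSup_eq
    refine ⟨Set.mem_image_of_mem _ hx, ?_⟩
    rintro _ ⟨y, hy, rfl⟩
    exact hmax y hy
  choose p hp hpg using rse_gap_points hn uf δ hδΔ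
  suffices h : ∃ y ∈ simplex 2, ∃ c, valBR ul uf δ x ≤ c ∧ ∀ l ∈ BRd uf δ y, mixU ul y l = c by
    obtain ⟨y, hy, c, hc, hl⟩ := h
    obtain ⟨h1, h2⟩ := rse_good hn ul uf δ hδ y c hl
    refine ⟨y, hy, ?_, h2⟩
    rw [hR]
    have := hmax y hy
    linarith
  obtain ⟨j, hj, hjV⟩ := rse_val_mem hn ul uf δ hδ x
  by_cases hs : ∀ l ∈ BRd uf δ x, mixU ul x l = valBR ul uf δ x
  · exact ⟨x, hx, _, le_rfl, hs⟩
  · push Not at hs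
    obtain ⟨k, hk, hkV⟩ := hs
    have hjk : j ≠ k := by
      rintro rfl
      exact hkV hjV
    rcases le_total (p j 1) (p k 1) with h | h
    · exact rse_pair hn ul uf δ hδ p hp hpg x hx j k hjk hj hk h
    · exact rse_pair hn ul uf δ hδ p hp hpg x hx k j hjk.symm hk hj h
end
end

section
/- Let (u_f) be a follower utility matrix for a game with m ≥ 1 leader actions, n ≥ 2 follower actions, values in [0,1], and inducibility gap Δ > 0. For S ⊆ [n] and δ > 0, let X(δ; S) = {x ∈ Δ^m : BR_δ(x) = S}. Then for every follower action j ∈ [n] and every δ ∈ (0, Δ): X(δ; {j}) is nonempty, and for every δ' ∈ (δ, Δ) the inclusion X(δ'; {j}) ⊂ X(δ; {j}) is strict (X(δ'; {j}) ⊆ X(δ; {j}) and there exists a point of X(δ; {j}) not in X(δ'; {j})). -/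
open Finset Set

noncomputable section

/-- The δ-best-response region of a subset `S` of follower actions. -/
def Xreg {m n : ℕ} (uf : Fin m → Fin n → ℝ) (δ : ℝ) (S : Set (Fin n)) :
    Set (Fin m → ℝ) :=
  {x ∈ simplex m | BRd uf δ x = S}

lemma aux_mem {m n : ℕ} (uf : Fin m → Fin n → ℝ) (j : Fin n) (δ : ℝ) (hδ : 0 < δ)
    (x : Fin m → ℝ) :
    x ∈ Xreg uf δ {j} ↔ x ∈ simplex m ∧ ∀ k, k ≠ j → δ ≤ mixU uf x j - mixU uf x k := by
  haveI : Nonempty (Fin n) := ⟨j⟩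
  have hle : ∀ k, mixU uf x k ≤ ⨆ j', mixU uf x j' :=
    fun k => le_ciSup (Set.finite_range (mixU uf x)).bddAbove k
  obtain ⟨k0, hk0⟩ := exists_eq_ciSup_of_finite (f := mixU uf x)
  unfold Xreg
  rw [Set.mem_setOf_eq]
  refine and_congr_right fun _ => ?_
  constructor
  · intro h k hk
    have h0 : k0 ∈ BRd uf δ x := by
      change mixU uf x k0 > (⨆ j', mixU uf x j') - δ
      linarith
    rw [h, Set.mem_singleton_iff] at h0
    have h1 : k ∉ BRd uf δ x := by rw [h]; simpa using hk
    have h2 : ¬ (mixU uf x k > (⨆ j', mixU uf x j') - δ) := h1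
    rw [h0] at hk0
    linarith
  · intro h
    have hs : mixU uf x j = ⨆ j', mixU uf x j' := by
      by_cases hkj : k0 = j
      · rw [← hkj]; exact hk0
      · have := h k0 hkj
        have := hle j
        linarith
    ext k
    rw [Set.mem_singleton_iff]
    change mixU uf x k > (⨆ j', mixU uf x j') - δ ↔ k = j
    constructor
    · intro hk
      by_contra hne
      have := h k hne
      linarith
    · rintro rfl
      linarith

/-- Minimal advantage of action `j` over the other actions. -/
def gapAt {m n : ℕ} (uf : Fin m → Fin n → ℝ) (j : Fin n) (x : Fin m → ℝ) : ℝ :=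
  ⨅ j' : {k : Fin n // k ≠ j}, (mixU uf x j - mixU uf x j'.1)

lemma gapAt_le {m n : ℕ} (uf : Fin m → Fin n → ℝ) (j k : Fin n) (hk : k ≠ j)
    (x : Fin m → ℝ) : gapAt uf j x ≤ mixU uf x j - mixU uf x k :=
  ciInf_le (f := fun j' : {k : Fin n // k ≠ j} => mixU uf x j - mixU uf x j'.1)
    (Set.finite_range _).bddBelow ⟨k, hk⟩

lemma gapAt_cont {m n : ℕ} (uf : Fin m → Fin n → ℝ) (j : Fin n)
    [Nonempty {k : Fin n // k ≠ j}] : Continuous (gapAt uf j) := by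
  have : gapAt uf j = fun x => (Finset.univ : Finset {k : Fin n // k ≠ j}).inf'
      Finset.univ_nonempty (fun j' => mixU uf x j - mixU uf x j'.1) := by
    funext x
    rw [Finset.inf'_univ_eq_ciInf]
    rfl
  rw [this]
  apply Continuous.finset_inf'_apply
  intro i _
  unfold mixU
  fun_prop

lemma exists_gap {m n : ℕ} (hm : 1 ≤ m) (uf : Fin m → Fin n → ℝ) (δ : ℝ)
    (h : δ < indGap uf) (j : Fin n) : ∃ x ∈ simplex m, δ < gapAt uf j x := by
  have h1 : indGap uf ≤ sSup (gapAt uf j '' simplex m) :=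
    ciInf_le (f := fun j => sSup (gapAt uf j '' simplex m)) (Set.finite_range _).bddBelow j
  have hne : (simplex m).Nonempty := ⟨_, single_mem_stdSimplex ℝ (⟨0, hm⟩ : Fin m)⟩
  obtain ⟨_, ⟨x, hx, rfl⟩, hlt⟩ := exists_lt_of_lt_csSup (hne.image _) (lt_of_lt_of_le h h1)
  exact ⟨x, hx, hlt⟩

/-- singleton δ-best-response regions are nonempty and strictly
shrink as δ increases within `(0, Δ)`. -/
theorem singleton_region_nonempty_strict_antitone (m n : ℕ) (hm : 1 ≤ m) (hn : 2 ≤ n)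
    (uf : Fin m → Fin n → ℝ) (huf : ∀ i j, uf i j ∈ Set.Icc (0:ℝ) 1)
    (hΔ : 0 < indGap uf) (j : Fin n) (δ : ℝ) (hδ : 0 < δ) (hδΔ : δ < indGap uf) :
    (Xreg uf δ {j}).Nonempty ∧
    ∀ δ' : ℝ, δ < δ' → δ' < indGap uf →
      Xreg uf δ' {j} ⊆ Xreg uf δ {j} ∧ ∃ x ∈ Xreg uf δ {j}, x ∉ Xreg uf δ' {j} := by
  obtain ⟨k, hk⟩ : ∃ k : Fin n, k ≠ j := by
    haveI : Nontrivial (Fin n) := Fin.nontrivial_iff_two_le.mpr hn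
    exact exists_ne j
  haveI : Nonempty {k : Fin n // k ≠ j} := ⟨⟨k, hk⟩⟩
  obtain ⟨a, ha, hga⟩ := exists_gap hm uf δ hδΔ j
  refine ⟨⟨a, (aux_mem uf j δ hδ a).2 ⟨ha, fun k hk => ?_⟩⟩, ?_⟩
  · exact hga.le.trans (gapAt_le uf j k hk a)
  intro δ' hlt hlt'
  refine ⟨fun x hx => ?_, ?_⟩
  · rw [aux_mem uf j δ' (hδ.trans hlt)] at hx
    rw [aux_mem uf j δ hδ]
    exact ⟨hx.1, fun k hk => hlt.le.trans (hx.2 k hk)⟩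
  obtain ⟨b, hb, hgb⟩ := exists_gap hm uf δ hδΔ k
  have hgb' : gapAt uf j b ≤ δ := by
    have h1 := gapAt_le uf j k hk b
    have h2 := gapAt_le uf k j hk.symm b
    linarith
  obtain ⟨x, hx, hxe⟩ := (convex_stdSimplex ℝ (Fin m)).isPreconnected.intermediate_value hb ha
    (gapAt_cont uf j).continuousOn ⟨hgb', hga.le⟩
  refine ⟨x, (aux_mem uf j δ hδ x).2 ⟨hx, fun k hk => hxe ▸ gapAt_le uf j k hk x⟩, fun hx' => ?_⟩
  rw [aux_mem uf j δ' (hδ.trans hlt)] at hx'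
  have : δ' ≤ gapAt uf j x := le_ciInf fun j' => hx'.2 j'.1 j'.2
  linarith
end
end

section
/- Let u_f : [2]×[n] → [0,1] be a follower utility matrix for a game with m = 2 leader actions, n ≥ 3 follower actions, and inducibility gap Δ > 0, and let δ ∈ (0, Δ). Then for every subset S ⊆ [n] with |S| ≥ 3, there is no leader strategy x ∈ Δ^2 with BR_δ(x) = S; i.e., the δ-best-response region X(δ; S) is empty whenever |S| ≥ 3. -/
open Finset Set

noncomputable section

lemma affine_no_between (p q δ t s r : ℝ) (ht : p * t + q < δ) (hs : δ < p * s + q)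
    (hr : p * r + q < δ) : ¬ (t ≤ s ∧ s ≤ r) ∧ ¬ (r ≤ s ∧ s ≤ t) := by
  constructor <;> rintro ⟨h1, h2⟩ <;> rcases le_total 0 p with hp | hp
  · nlinarith [mul_le_mul_of_nonneg_left h2 hp]
  · nlinarith [mul_le_mul_of_nonpos_left h1 hp]
  · nlinarith [mul_le_mul_of_nonneg_left h2 hp]
  · nlinarith [mul_le_mul_of_nonpos_left h1 hp]

lemma mixU_two {n : ℕ} (u : Fin 2 → Fin n → ℝ) (x : Fin 2 → ℝ) (hx : x ∈ simplex 2) (j : Fin n) :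
    mixU u x j = (u 0 j - u 1 j) * x 0 + u 1 j := by
  have h := hx.2
  rw [Fin.sum_univ_two] at h
  have h1 : x 1 = 1 - x 0 := by linarith
  simp only [mixU, Fin.sum_univ_two, h1]
  ring

lemma exists_inducing {n : ℕ} (uf : Fin 2 → Fin n → ℝ) (δ : ℝ) (h : δ < indGap uf) (j : Fin n) :
    ∃ x ∈ simplex 2, ∀ k, k ≠ j → δ < mixU uf x j - mixU uf x k := by
  have h1 := lt_of_lt_of_le h (ciInf_le (Set.finite_range _).bddBelow j)
  have hne : (simplex 2).Nonempty := ⟨_, single_mem_stdSimplex ℝ (0 : Fin 2)⟩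
  obtain ⟨_, ⟨x, hx, rfl⟩, hlt⟩ := exists_lt_of_lt_csSup (hne.image _) h1
  refine ⟨x, hx, fun k hk => lt_of_lt_of_le hlt ?_⟩
  exact ciInf_le (f := fun j' : {k : Fin n // k ≠ j} => mixU uf x j - mixU uf x j'.1)
    (Set.finite_range _).bddBelow ⟨k, hk⟩

/-- when `m = 2` and `0 < δ < Δ`, no leader strategy has a δ-optimal
response set of size 3 or more. -/
theorem no_large_br_region (n : ℕ) (hn : 3 ≤ n) (uf : Fin 2 → Fin n → ℝ)
    (huf : ∀ i j, uf i j ∈ Set.Icc (0:ℝ) 1)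
    (hΔ : 0 < indGap uf) (δ : ℝ) (hδ : 0 < δ) (hδΔ : δ < indGap uf)
    (S : Set (Fin n)) (hS : 3 ≤ S.ncard) :
    ∀ x ∈ simplex 2, BRd uf δ x ≠ S := by
  rintro x hx rfl
  choose y hy hgap using exists_inducing uf δ hδΔ
  have hnear : ∀ k ∈ BRd uf δ x, ∀ j, mixU uf x j - mixU uf x k < δ := by
    intro k hk j
    have h1 : mixU uf x k > (⨆ j', mixU uf x j') - δ := hk
    have h2 := le_ciSup (f := fun j' => mixU uf x j') (Set.finite_range _).bddAbove j
    linarith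
  have key : ∀ j k, k ∈ BRd uf δ x → j ≠ k →
      ¬ (x 0 ≤ y j 0 ∧ y j 0 ≤ y k 0) ∧ ¬ (y k 0 ≤ y j 0 ∧ y j 0 ≤ x 0) := by
    intro j k hk hjk
    have h1 := hnear k hk j
    have h2 := hgap j k hjk.symm
    have h3 := hgap k j hjk
    rw [mixU_two uf _ hx, mixU_two uf _ hx] at h1
    rw [mixU_two uf _ (hy j), mixU_two uf _ (hy j)] at h2
    rw [mixU_two uf _ (hy k), mixU_two uf _ (hy k)] at h3
    exact affine_no_between ((uf 0 j - uf 1 j) - (uf 0 k - uf 1 k)) (uf 1 j - uf 1 k) δ _ _ _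
      (by linarith) (by linarith) (by linarith)
  obtain ⟨a, b, c, ha, hb, hc, hab, hac, hbc⟩ :=
    (Set.two_lt_ncard_iff (Set.toFinite _)).1 hS
  have same : ∀ j k, j ∈ BRd uf δ x → k ∈ BRd uf δ x → j ≠ k →
      ¬ (x 0 ≤ y j 0 ∧ x 0 ≤ y k 0) ∧ ¬ (y j 0 ≤ x 0 ∧ y k 0 ≤ x 0) := by
    intro j k hj hk hjk
    have h1 := key j k hk hjk
    have h2 := key k j hj hjk.symm
    rcases le_total (y j 0) (y k 0) with h | h
    · exact ⟨fun h' => h1.1 ⟨h'.1, h⟩, fun h' => h2.2 ⟨h, h'.2⟩⟩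
    · exact ⟨fun h' => h2.1 ⟨h'.2, h⟩, fun h' => h1.2 ⟨h, h'.1⟩⟩
  have k1 := same a b ha hb hab
  have k2 := same a c ha hc hac
  have k3 := same b c hb hc hbc
  rcases le_total (x 0) (y a 0) with h1 | h1
  · rcases le_total (x 0) (y b 0) with h2 | h2
    · exact k1.1 ⟨h1, h2⟩
    · rcases le_total (x 0) (y c 0) with h3 | h3
      · exact k2.1 ⟨h1, h3⟩
      · exact k3.2 ⟨h2, h3⟩
  · rcases le_total (x 0) (y b 0) with h2 | h2
    · rcases le_total (x 0) (y c 0) with h3 | h3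
      · exact k3.1 ⟨h2, h3⟩
      · exact k2.2 ⟨h1, h3⟩
    · exact k1.2 ⟨h1, h2⟩
end
end

section
/- There exists a finite Stackelberg game (u_l, u_f) with utilities in [0,1] and inducibility gap Δ > 0 such that the function δ ↦ u_RSE(δ), defined on (0, ∞), is discontinuous at some point δ₀ with δ₀ ≥ Δ. Hence the Lipschitz continuity of u_RSE on (0, Δ − 1/L] cannot in general be extended to δ ≥ Δ. -/
open Finset Set

noncomputable section

theorem auxBound {x : Fin 2 → ℝ} (hx : x ∈ simplex 2) :
    0 ≤ x 0 ∧ 0 ≤ x 1 ∧ x 0 + x 1 = 1 := by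
  have h := hx.2
  rw [Fin.sum_univ_two] at h
  exact ⟨hx.1 0, hx.1 1, h⟩

theorem auxUf (x : Fin 2 → ℝ) (j : Fin 2) :
    mixU (fun i j : Fin 2 => if i = j then (1:ℝ) else 0) x j = x j := by
  simp [mixU]

theorem auxUl {x : Fin 2 → ℝ} (hx : x ∈ simplex 2) (j : Fin 2) :
    mixU (fun _ j : Fin 2 => if j = 1 then (1:ℝ) else 0) x j = if j = 1 then 1 else 0 := by
  obtain ⟨_, _, h⟩ := auxBound hx
  simp only [mixU, Fin.sum_univ_two]
  rw [← add_mul, h, one_mul]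

theorem auxSingle (j : Fin 2) : (fun i => if i = j then (1:ℝ) else 0) ∈ simplex 2 := by
  refine ⟨fun i => ?_, by simp⟩
  dsimp only
  split_ifs <;> norm_num

theorem auxLe {x : Fin 2 → ℝ} (hx : x ∈ simplex 2) (j : Fin 2) : 0 ≤ x j ∧ x j ≤ 1 := by
  obtain ⟨h0, h1, h⟩ := auxBound hx
  fin_cases j
  · exact ⟨h0, by dsimp; linarith⟩
  · exact ⟨h1, by dsimp; linarith⟩

theorem auxGapLe (j : Fin 2) {x : Fin 2 → ℝ} (hx : x ∈ simplex 2) :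
    (⨅ j' : {k : Fin 2 // k ≠ j}, (x j - x j'.1)) ≤ 1 := by
  obtain ⟨k, hk⟩ := exists_ne j
  refine (ciInf_le (Set.finite_range _).bddBelow ⟨k, hk⟩).trans ?_
  have := auxLe hx j
  have := auxLe hx k
  dsimp only
  linarith

theorem auxGap : indGap (fun i j : Fin 2 => if i = j then (1:ℝ) else 0) = 1 := by
  have key : ∀ j : Fin 2, sSup ((fun x : Fin 2 → ℝ => ⨅ j' : {k : Fin 2 // k ≠ j},
      (x j - x j'.1)) '' simplex 2) = 1 := by
    intro j
    apply le_antisymm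
    · apply csSup_le
      · exact ⟨_, _, auxSingle j, rfl⟩
      · rintro _ ⟨x, hx, rfl⟩
        exact auxGapLe j hx
    · have hb : BddAbove ((fun x : Fin 2 → ℝ => ⨅ j' : {k : Fin 2 // k ≠ j},
          (x j - x j'.1)) '' simplex 2) := by
        refine ⟨1, ?_⟩
        rintro _ ⟨x, hx, rfl⟩
        exact auxGapLe j hx
      refine le_trans ?_ (le_csSup hb ⟨_, auxSingle j, rfl⟩)
      obtain ⟨k, hk⟩ := exists_ne j
      haveI : Nonempty {k : Fin 2 // k ≠ j} := ⟨⟨k, hk⟩⟩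
      refine le_ciInf ?_
      rintro ⟨l, hl⟩
      simp [hl]
  simp only [indGap, auxUf, key, ciInf_const]

theorem auxSup {x : Fin 2 → ℝ} (hx : x ∈ simplex 2) : (⨆ j, x j) ≤ 1 :=
  ciSup_le fun j => (auxLe hx j).2

theorem auxBig {δ : ℝ} (hδ : 1 < δ) :
    uRSE (fun _ j : Fin 2 => if j = 1 then (1:ℝ) else 0)
      (fun i j : Fin 2 => if i = j then (1:ℝ) else 0) δ = 0 := by
  have key : ∀ x ∈ simplex 2, valBR (fun _ j : Fin 2 => if j = 1 then (1:ℝ) else 0)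
      (fun i j : Fin 2 => if i = j then (1:ℝ) else 0) δ x = 0 := by
    intro x hx
    have hlb : ∀ y ∈ mixU (fun _ j : Fin 2 => if j = 1 then (1:ℝ) else 0) x ''
        BRd (fun i j : Fin 2 => if i = j then (1:ℝ) else 0) δ x, 0 ≤ y := by
      rintro _ ⟨j, _, rfl⟩
      rw [auxUl hx]
      split_ifs <;> norm_num
    apply le_antisymm
    · refine csInf_le ⟨0, hlb⟩ ⟨0, ?_, ?_⟩
      · simp only [BRd, auxUf, Set.mem_setOf_eq]
        have := auxSup hx
        have := (auxLe hx 0).1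
        linarith
      · rw [auxUl hx]; simp
    · exact Real.sInf_nonneg hlb
  unfold uRSE
  rw [Set.image_congr key, Set.Nonempty.image_const ⟨_, auxSingle 0⟩, csSup_singleton]

theorem auxOne :
    1 ≤ uRSE (fun _ j : Fin 2 => if j = 1 then (1:ℝ) else 0)
      (fun i j : Fin 2 => if i = j then (1:ℝ) else 0) 1 := by
  have hb : BddAbove (valBR (fun _ j : Fin 2 => if j = 1 then (1:ℝ) else 0)
      (fun i j : Fin 2 => if i = j then (1:ℝ) else 0) 1 '' simplex 2) := by
    refine ⟨1, ?_⟩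
    rintro _ ⟨x, hx, rfl⟩
    refine Real.sInf_le_iff ?_ ?_ |>.2 ?_
    · refine ⟨0, ?_⟩
      rintro _ ⟨j, _, rfl⟩
      rw [auxUl hx]
      split_ifs <;> norm_num
    · obtain ⟨j, hj⟩ := exists_eq_ciSup_of_finite (f := x)
      refine ⟨_, j, ?_, rfl⟩
      simp only [BRd, auxUf, Set.mem_setOf_eq]
      rw [hj]; linarith
    · intro ε hε
      obtain ⟨j, hj⟩ := exists_eq_ciSup_of_finite (f := x)
      refine ⟨_, ⟨j, ?_, rfl⟩, ?_⟩
      · simp only [BRd, auxUf, Set.mem_setOf_eq]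
        rw [hj]; linarith
      · rw [auxUl hx]
        split_ifs <;> linarith
  refine le_trans ?_ (le_csSup hb ⟨_, auxSingle 1, rfl⟩)
  have hs : (⨆ j : Fin 2, (if j = 1 then (1:ℝ) else 0)) = 1 := by
    apply le_antisymm (auxSup (auxSingle 1))
    have := le_ciSup (f := fun j : Fin 2 => (if j = 1 then (1:ℝ) else 0))
      (Set.finite_range _).bddAbove 1
    simpa using this
  refine le_csInf ?_ ?_
  · refine ⟨_, 1, ?_, rfl⟩
    simp only [BRd, auxUf, Set.mem_setOf_eq, hs]
    norm_num
  · rintro _ ⟨j, hj, rfl⟩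
    simp only [BRd, auxUf, Set.mem_setOf_eq, hs] at hj
    rw [auxUl (auxSingle 1)]
    split_ifs with h
    · exact le_rfl
    · simp [h] at hj

/-- `u_RSE` (as a function on `(0, ∞)`) can be discontinuous at some
point `δ₀ ≥ Δ`, even when the inducibility gap `Δ` is positive. -/
theorem uRSE_discontinuous_beyond_gap :
    ∃ (m n : ℕ) (ul uf : Fin m → Fin n → ℝ),
      (∀ i j, ul i j ∈ Set.Icc (0:ℝ) 1) ∧ (∀ i j, uf i j ∈ Set.Icc (0:ℝ) 1) ∧
      0 < indGap uf ∧
      ∃ δ₀ : ℝ, indGap uf ≤ δ₀ ∧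
        ¬ ContinuousWithinAt (uRSE ul uf) (Set.Ioi 0) δ₀ := by
  refine ⟨2, 2, fun _ j => if j = 1 then (1:ℝ) else 0, fun i j => if i = j then (1:ℝ) else 0,
    ?_, ?_, ?_, 1, ?_, ?_⟩
  · intro i j
    dsimp only
    split_ifs <;> simp
  · intro i j
    dsimp only
    split_ifs <;> simp
  · rw [auxGap]; norm_num
  · rw [auxGap]
  · intro hc
    have h1 := hc.mono (Set.Ioi_subset_Ioi (zero_le_one (α := ℝ)))
    have h2 : Filter.Tendsto (uRSE (fun _ j : Fin 2 => if j = 1 then (1:ℝ) else 0)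
      (fun i j : Fin 2 => if i = j then (1:ℝ) else 0)) (nhdsWithin 1 (Set.Ioi 1)) (nhds 0) := by
      refine tendsto_const_nhds.congr' ?_
      filter_upwards [self_mem_nhdsWithin] with δ hδ
      exact (auxBig hδ).symm
    have h3 := tendsto_nhds_unique h1 h2
    have h4 := auxOne
    rw [h3] at h4
    linarith
end
end
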